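/- In the setting where G ∈ 𝒪(k) (k ≥ 3 odd) has unique cycle vertices u=u_0,u_1,…,u_{k−1} with deg(u)=4 and deg(u_i)=2 for i ≥ 1, for every t ≥ 1 with k+2t ≤ n: if 2^{k+2t} · ρ_{n−k−2t} is an integer, then 2^{2t} · K_{2t} is an integer. -/

import Mathlib

open Matrix

attribute [local instance] Classical.propDecidable

namespace GroverPaper

variable {V : Type*}

/-- The arc set of a simple graph: ordered pairs of adjacent vertices. -/
abbrev Arc (G : SimpleGraph V) : Type _ := {p : V × V // G.Adj p.1 p.2}

/-- The time evolution matrix of the Grover walk on a graph `G`. -/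
noncomputable def groverU [Fintype V] (G : SimpleGraph V) :
    Matrix (Arc G) (Arc G) ℂ := fun e f =>
  if f.val.2 = e.val.1 then
    if e.val = (f.val.2, f.val.1) then 2 / (G.degree f.val.2 : ℂ) - 1
    else 2 / (G.degree f.val.2 : ℂ)
  else 0

/-- A graph is periodic if some positive power of its Grover evolution is the identity. -/
def IsPeriodic [Fintype V] (G : SimpleGraph V) : Prop :=
  ∃ k : ℕ, 0 < k ∧ groverU G ^ k = 1

/-- The period of a periodic graph: the least positive `k` with `U^k = 1`. -/
noncomputable def period [Fintype V] (G : SimpleGraph V) : ℕ :=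
  sInf {k : ℕ | 0 < k ∧ groverU G ^ k = 1}

/-- A graph is `k`-periodic if it is periodic with period `k`. -/
def IsKPeriodic [Fintype V] (G : SimpleGraph V) (k : ℕ) : Prop :=
  IsPeriodic G ∧ period G = k

/-- A graph is odd-periodic if it is periodic with odd period. -/
def IsOddPeriodic [Fintype V] (G : SimpleGraph V) : Prop :=
  IsPeriodic G ∧ Odd (period G)

/-- The transition matrix of the isotropic random walk on `G`. -/
noncomputable def transition [Fintype V] (G : SimpleGraph V) :
    Matrix V V ℝ := fun u v =>
  if G.Adj u v then 1 / (G.degree u : ℝ) else 0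

/-- `M(e) = 1/(deg x · deg y)` for an edge `e = xy`. -/
noncomputable def edgeM [Fintype V] (G : SimpleGraph V) : Sym2 V → ℝ :=
  Sym2.lift ⟨fun x y => 1 / ((G.degree x : ℝ) * (G.degree y : ℝ)), fun x y => by simp [mul_comm]⟩

/-- The sum, over all `i`-matchings contained in the edge collection `A`, of the product of
the `M`-values of the matching. (For `i = 0` this is `1`; if there is no such matching it
is `0`.) -/
noncomputable def matchSum [Fintype V] (G : SimpleGraph V) (A : Finset (Sym2 V)) (i : ℕ) : ℝ :=
  ∑ S ∈ A.powerset.filter (fun S => S.card = i ∧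
      ∀ e ∈ S, ∀ f ∈ S, e ≠ f → ∀ x : V, ¬(x ∈ e ∧ x ∈ f)),
    ∏ e ∈ S, edgeM G e

/-- The edges of `G` that neither lie on the cycle `c 0 ∼ c 1 ∼ … ∼ c (k-1) ∼ c 0` nor are
incident to `u = c 0`; this is the edge set `E_T` of the paper. -/
noncomputable def treeEdges [Fintype V] {k : ℕ} (G : SimpleGraph V) (c : ZMod k → V) :
    Finset (Sym2 V) :=
  G.edgeFinset.filter fun e => (∀ i : ZMod k, e ≠ s(c i, c (i + 1))) ∧ c 0 ∉ e

/-- `K_{2i}` of the paper: the sum over all `i`-matchings in `E_T` of the products of the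
`M`-values. -/
noncomputable def Km [Fintype V] {k : ℕ} (G : SimpleGraph V) (c : ZMod k → V) (i : ℕ) : ℝ :=
  matchSum G (treeEdges G c) i

/-- `K^g_{2i}(2,…,r)` of the paper, where `v` is the path `u = v 0, v 1, v 2, …` so that
`g_j = v_{j-1} v_j`: the sum over all `i`-matchings in `E_T ∖ {g_2,…,g_r}`. -/
noncomputable def Kg [Fintype V] {k : ℕ} (G : SimpleGraph V) (c : ZMod k → V)
    (v : ℕ → V) (i r : ℕ) : ℝ :=
  matchSum G (treeEdges G c \ (Finset.Icc 2 r).image fun j => s(v (j - 1), v j)) i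

/-- `L_{2i}(2,…,r) = K^g_{2i}(2,…,r) + K^h_{2i}(2,…,r)` of the paper. -/
noncomputable def Lm [Fintype V] {k : ℕ} (G : SimpleGraph V) (c : ZMod k → V)
    (v w : ℕ → V) (i r : ℕ) : ℝ :=
  Kg G c v i r + Kg G c w i r

/-! Expanding the determinant, `ρ_{n-m}` is up to the sign `(-1)^m` the sum of
`sgn σ · ∏_{σ x ≠ x} 1 / deg x` over the permutations `σ` that move exactly `m` vertices, each to a
neighbour. Such a `σ` that crosses a bridge must cross it back at once, since by finiteness it can
only leave one side of the bridge if it also enters it. As every edge off the unique cycle `C` is a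
bridge, for odd `m` the permutation `σ` runs once round `C`, in one of the two directions, and is an
involution elsewhere, that is, a matching avoiding `C`. With `k - 1` vertices of degree `2` on `C`
this gives `2 ^ k * deg u * ρ_{n-k-2t} = ± 4 * K_{2t}`, so that `K_{2t}` is an integral multiple of
`2 ^ k * ρ_{n-k-2t}` as soon as `4` divides `deg u`. -/

open Equiv Finset

section PermutationExpansion

variable {R : Type*} [CommRing R] [Fintype V] [DecidableEq V]

theorem charpoly_coeff_of_diag_eq_zero (A : Matrix V V R) (hA : ∀ x, A x x = 0) {m : ℕ}
    (hm : m ≤ Fintype.card V) :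
    A.charpoly.coeff (Fintype.card V - m) =
      ∑ σ : Perm V with #σ.support = m, (Perm.sign σ : ℤ) * ∏ x ∈ σ.support, -A x (σ x) := by
  rw [Matrix.charpoly, ← det_transpose, det_apply', Polynomial.finsetSum_coeff, sum_filter]
  refine sum_congr rfl fun σ _ => ?_
  have hmoved : ∏ x ∈ σ.support, (charmatrix A)ᵀ (σ x) x =
      Polynomial.C (∏ x ∈ σ.support, -A x (σ x)) := by
    rw [map_prod]
    refine prod_congr rfl fun x hx => ?_
    rw [transpose_apply, charmatrix_apply_ne _ _ _ (Perm.mem_support.1 hx).symm, map_neg]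
  have hfixed : ∏ x ∈ σ.supportᶜ, (charmatrix A)ᵀ (σ x) x =
      Polynomial.X ^ (Fintype.card V - #σ.support) := by
    rw [← card_compl, ← prod_const]
    refine prod_congr rfl fun x hx => ?_
    rw [transpose_apply, Perm.notMem_support.1 (mem_compl.1 hx), charmatrix_apply_eq, hA,
      map_zero, sub_zero]
  have hcard : Fintype.card V - m = Fintype.card V - #σ.support ↔ #σ.support = m := by
    have := card_le_univ σ.support
    lia
  rw [← prod_mul_prod_compl σ.support, hmoved, hfixed,
    ← map_intCast (Polynomial.C : R →+* Polynomial R), Polynomial.coeff_C_mul,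
    Polynomial.coeff_C_mul_X_pow]
  simp only [hcard, mul_ite, mul_zero]

/-- The contribution of a permutation to a determinant whose entry `(x, y)` is the row weight
`w x`, with the fixed points left out. -/
def signedWeight (w : V → R) (σ : Perm V) : R :=
  (Perm.sign σ : ℤ) * ∏ x ∈ σ.support, w x

theorem signedWeight_mul_of_disjoint (w : V → R) {σ τ : Perm V} (h : σ.Disjoint τ) :
    signedWeight w (σ * τ) = signedWeight w σ * signedWeight w τ := by
  rw [signedWeight, h.support_mul, prod_union h.disjoint_support, Perm.sign_mul, Units.val_mul,
    Int.cast_mul, mul_mul_mul_comm, ← signedWeight, ← signedWeight]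

theorem signedWeight_inv (w : V → R) (σ : Perm V) : signedWeight w σ⁻¹ = signedWeight w σ := by
  rw [signedWeight, signedWeight, Perm.sign_inv, Perm.support_inv]

theorem signedWeight_of_isCycle_of_odd (w : V → R) {ρ : Perm V} (hρ : ρ.IsCycle)
    (hodd : Odd #ρ.support) : signedWeight w ρ = ∏ x ∈ ρ.support, w x := by
  rw [signedWeight, hρ.sign, hodd.neg_one_pow, neg_neg, Units.val_one, Int.cast_one, one_mul]

theorem apply_apply_ne_of_isCycle_of_odd {ρ : Perm V} (hρ : ρ.IsCycle) (hodd : Odd #ρ.support)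
    {x : V} (hx : ρ x ≠ x) : ρ (ρ x) ≠ x := fun h =>
  hodd.not_two_dvd_nat (Perm.two_dvd_card_support (hρ.pow_eq_one_iff.2 ⟨x, hx, h⟩))

end PermutationExpansion

section MovesAlong

/-- A permutation of the vertices of `G` moves along `G` if it sends every vertex to itself or to
a neighbour: its cycles run round cycles of `G`, transpositions being single edges. -/
def MovesAlong (G : SimpleGraph V) (σ : Perm V) : Prop :=
  ∀ ⦃x⦄, σ x ≠ x → G.Adj x (σ x)

variable {G : SimpleGraph V} {σ τ : Perm V}

theorem MovesAlong.inv (hσ : MovesAlong G σ) : MovesAlong G σ⁻¹ := by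
  intro x hx
  obtain ⟨y, rfl⟩ := σ.surjective x
  have hy : σ⁻¹ (σ y) = y := σ.symm_apply_apply y
  rw [hy] at hx ⊢
  exact (hσ hx.symm).symm

theorem movesAlong_mul_iff (h : σ.Disjoint τ) :
    MovesAlong G (σ * τ) ↔ MovesAlong G σ ∧ MovesAlong G τ := by
  have hfst : ∀ x, τ x = x → (σ * τ) x = σ x := fun x hx => by rw [Perm.mul_apply, hx]
  have hsnd : ∀ x, σ x = x → (σ * τ) x = τ x := fun x hx => by
    rw [h.commute.eq, Perm.mul_apply, hx]
  refine ⟨fun hστ => ⟨fun x hx => ?_, fun x hx => ?_⟩, fun ⟨hσ, hτ⟩ x hx => ?_⟩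
  · have hmul := hfst x ((h x).resolve_left hx)
    rw [← hmul] at hx ⊢
    exact hστ hx
  · have hmul := hsnd x ((h x).resolve_right hx)
    rw [← hmul] at hx ⊢
    exact hστ hx
  · rcases h x with hfix | hfix
    · rw [hsnd x hfix] at hx ⊢
      exact hτ hx
    · rw [hfst x hfix] at hx ⊢
      exact hσ hx

/-- The finset of the permutations that move exactly `m` vertices, all of them along `G`. -/
noncomputable def permsAlong [Fintype V] [DecidableEq V] (G : SimpleGraph V) (m : ℕ) :
    Finset (Perm V) :=
  {σ | #σ.support = m ∧ MovesAlong G σ}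

theorem mem_permsAlong [Fintype V] [DecidableEq V] {m : ℕ} :
    σ ∈ permsAlong G m ↔ #σ.support = m ∧ MovesAlong G σ :=
  mem_filter_univ σ

theorem charpoly_transition_coeff [Fintype V] [DecidableEq V] (G : SimpleGraph V) {m : ℕ}
    (hm : m ≤ Fintype.card V) :
    (transition G).charpoly.coeff (Fintype.card V - m) =
      (-1) ^ m * ∑ σ ∈ permsAlong G m, signedWeight (fun x => (G.degree x : ℝ)⁻¹) σ := by
  rw [charpoly_coeff_of_diag_eq_zero _ (by simp [transition]) hm, permsAlong, ← filter_filter,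
    sum_filter (MovesAlong G), mul_sum]
  refine sum_congr rfl fun σ hσ => ?_
  obtain rfl : #σ.support = m := by simpa using hσ
  rw [prod_neg, mul_left_comm]
  congr 1
  split_ifs with halong
  · rw [signedWeight]
    congr 1
    refine prod_congr rfl fun x hx => ?_
    rw [transition, if_pos (halong (Perm.mem_support.1 hx)), one_div]
  · simp only [MovesAlong, not_forall] at halong
    obtain ⟨x, hx, hadj⟩ := halong
    rw [prod_eq_zero (Perm.mem_support.2 hx) (if_neg hadj), mul_zero]

theorem sum_signedWeight_of_mem_cycleFactorsFinset {R : Type*} [CommRing R] [Fintype V]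
    [DecidableEq V] (w : V → R) {ρ : Perm V} (hρ : ρ.IsCycle) (hρG : MovesAlong G ρ) (m : ℕ) :
    ∑ σ ∈ permsAlong G (#ρ.support + m) with ρ ∈ σ.cycleFactorsFinset, signedWeight w σ =
      signedWeight w ρ * ∑ τ ∈ permsAlong G m with ρ.Disjoint τ, signedWeight w τ := by
  rw [mul_sum]
  symm
  refine sum_bij' (fun τ _ => ρ * τ) (fun σ _ => ρ⁻¹ * σ) (fun τ hτ => ?_) (fun σ hσ => ?_)
    (fun τ _ => inv_mul_cancel_left ρ τ) (fun σ _ => mul_inv_cancel_left ρ σ) (fun τ hτ => ?_)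
  · simp only [mem_filter, mem_permsAlong] at hτ ⊢
    obtain ⟨⟨hm, hτG⟩, hdisj⟩ := hτ
    refine ⟨⟨by rw [hdisj.card_support_mul, hm], (movesAlong_mul_iff hdisj).2 ⟨hρG, hτG⟩⟩, ?_⟩
    rw [hdisj.cycleFactorsFinset_mul_eq_union, hρ.cycleFactorsFinset_eq_singleton]
    exact mem_union_left _ (mem_singleton_self ρ)
  · simp only [mem_filter, mem_permsAlong] at hσ ⊢
    obtain ⟨⟨hm, hσG⟩, hmem⟩ := hσ
    have hdisj : ρ.Disjoint (ρ⁻¹ * σ) := fun x => by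
      rw [or_iff_not_imp_left, Perm.mul_apply, Perm.inv_eq_iff_eq]
      exact fun hx => ((Perm.mem_cycleFactorsFinset_iff.1 hmem).2 x (Perm.mem_support.2 hx)).symm
    have hcard := hdisj.card_support_mul
    rw [← mul_inv_cancel_left ρ σ, movesAlong_mul_iff hdisj] at hσG
    rw [mul_inv_cancel_left, hm] at hcard
    exact ⟨⟨(Nat.add_left_cancel hcard).symm, hσG.2⟩, hdisj⟩
  · exact (signedWeight_mul_of_disjoint w (mem_filter.1 hτ).2).symm

end MovesAlong

section Bridges

variable [Finite V] {G : SimpleGraph V} {σ ρ : Perm V}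

theorem MovesAlong.apply_apply_eq_of_isBridge (hσ : MovesAlong G σ) {x : V}
    (hb : G.IsBridge s(x, σ x)) : σ (σ x) = x := by
  by_contra hne
  let H := G.deleteEdges {s(x, σ x)}
  -- `σ` never enters the component of `x` in `H` from outside, so by finiteness it never leaves it.
  have hmaps : Set.MapsTo σ {y | ¬ H.Reachable x y} {y | ¬ H.Reachable x y} := by
    intro y hy hreach
    by_cases hfix : σ y = y
    · exact hy (hfix ▸ hreach)
    have hHadj : H.Adj y (σ y) := by
      refine SimpleGraph.deleteEdges_adj.2 ⟨hσ hfix, fun he => ?_⟩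
      rcases Sym2.eq_iff.1 (Set.mem_singleton_iff.1 he) with ⟨rfl, -⟩ | ⟨rfl, h⟩
      · exact hy (SimpleGraph.Reachable.refl _)
      · exact hne h
    exact hy (hreach.trans hHadj.reachable.symm)
  have hx := Perm.perm_symm_mapsTo_of_mapsTo σ hmaps (SimpleGraph.isBridge_iff.1 hb)
  rw [symm_apply_apply] at hx
  exact hx (SimpleGraph.Reachable.refl _)

theorem isBridge_of_card_edgeSet_eq (hconn : G.Connected)
    (hcard : Nat.card G.edgeSet = Nat.card V) (hρ : MovesAlong G ρ) {z : V} (hz : ρ (ρ z) ≠ z)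
    {x y : V} (hxy : G.Adj x y) (hx : ρ x ≠ y) (hy : ρ y ≠ x) : G.IsBridge s(x, y) := by
  by_contra hb
  let H := G.deleteEdges {s(x, y)}
  have htree : H.IsTree := by
    refine SimpleGraph.isTree_iff_connected_and_card.2
      ⟨hconn.connected_delete_edge_of_not_isBridge hb, ?_⟩
    rw [← hcard, Nat.card_coe_set_eq, Nat.card_coe_set_eq, SimpleGraph.edgeSet_deleteEdges]
    exact Set.ncard_sdiff_singleton_add_one hxy
  have hρH : MovesAlong H ρ := by
    refine fun v hv => SimpleGraph.deleteEdges_adj.2 ⟨hρ hv, fun he => ?_⟩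
    rcases Sym2.eq_iff.1 (Set.mem_singleton_iff.1 he) with ⟨rfl, h⟩ | ⟨rfl, h⟩
    · exact hx h
    · exact hy h
  have hmoved : ρ z ≠ z := fun h => hz (by rw [h, h])
  exact hz <| hρH.apply_apply_eq_of_isBridge <|
    SimpleGraph.isAcyclic_iff_forall_adj_isBridge.1 htree.isAcyclic (hρH hmoved)

end Bridges

section OnlyCycle

/-- The cyclic permutation `ρ` runs round a cycle of `G`, and every edge of `G` off that cycle is a
bridge. -/
structure IsOnlyCycle (G : SimpleGraph V) (ρ : Perm V) : Prop where
  isCycle : ρ.IsCycle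
  movesAlong : MovesAlong G ρ
  isBridge : ∀ ⦃x y⦄, G.Adj x y → ρ x ≠ y → ρ y ≠ x → G.IsBridge s(x, y)

namespace IsOnlyCycle

variable {G : SimpleGraph V} {σ τ ρ : Perm V}

theorem inv (h : IsOnlyCycle G ρ) : IsOnlyCycle G ρ⁻¹ where
  isCycle := h.isCycle.inv
  movesAlong := h.movesAlong.inv
  isBridge _ _ hxy hx hy :=
    h.isBridge hxy (fun h => hy (Perm.inv_eq_iff_eq.2 h.symm))
      (fun h => hx (Perm.inv_eq_iff_eq.2 h.symm))

theorem apply_eq_or_apply_eq [Finite V] (h : IsOnlyCycle G ρ) (hσ : MovesAlong G σ) {x : V}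
    (hx : σ (σ x) ≠ x) : ρ x = σ x ∨ ρ (σ x) = x := by
  by_contra! hne
  have hmoved : σ x ≠ x := fun hfix => hx (by rw [hfix, hfix])
  exact hx (hσ.apply_apply_eq_of_isBridge (h.isBridge (hσ hmoved) hne.1 hne.2))

theorem involutive_of_disjoint [Finite V] (h : IsOnlyCycle G ρ) (hτ : MovesAlong G τ)
    (hdisj : ρ.Disjoint τ) : Function.Involutive τ := by
  intro x
  by_contra hx
  have hmoved : τ x ≠ x := fun hfix => hx (by rw [hfix, hfix])
  have hfix : ρ x = x := (hdisj x).resolve_right hmoved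
  have hfix' : ρ (τ x) = τ x := (hdisj (τ x)).resolve_right fun h => hmoved (τ.injective h)
  rcases h.apply_eq_or_apply_eq hτ hx with heq | heq
  · exact hmoved (heq.symm.trans hfix)
  · exact hmoved (hfix'.symm.trans heq)

variable [Fintype V] [DecidableEq V]

theorem mem_cycleFactorsFinset_of_apply_eq (h : IsOnlyCycle G ρ) (hσ : MovesAlong G σ) {x : V}
    (hx : σ (σ x) ≠ x) (hxρ : ρ x = σ x) : ρ ∈ σ.cycleFactorsFinset := by
  have hmoved : ρ x ≠ x := fun hfix => hx (by rw [← hxρ, hfix, ← hxρ, hfix])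
  have hiter : ∀ n : ℕ,
      σ (σ ((ρ ^ n) x)) ≠ (ρ ^ n) x ∧ ρ ((ρ ^ n) x) = σ ((ρ ^ n) x) := by
    intro n
    induction n with
    | zero => exact ⟨hx, hxρ⟩
    | succ n ih =>
      rw [pow_succ', Perm.mul_apply, ih.2]
      have hne := fun h => ih.1 (σ.injective h)
      refine ⟨hne, (h.apply_eq_or_apply_eq hσ hne).resolve_right fun hback => ih.1 ?_⟩
      exact ρ.injective (hback.trans ih.2.symm)
  refine Perm.mem_cycleFactorsFinset_iff.2 ⟨h.isCycle, fun y hy => ?_⟩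
  obtain ⟨n, rfl⟩ := h.isCycle.exists_pow_eq hmoved (Perm.mem_support.1 hy)
  exact (hiter n).2

theorem mem_or_inv_mem_cycleFactorsFinset (h : IsOnlyCycle G ρ) (hσ : MovesAlong G σ)
    (hodd : Odd #σ.support) : ρ ∈ σ.cycleFactorsFinset ∨ ρ⁻¹ ∈ σ.cycleFactorsFinset := by
  obtain ⟨x, hx⟩ : ∃ x, σ (σ x) ≠ x := by
    by_contra! hinv
    exact hodd.not_two_dvd_nat (Perm.two_dvd_card_support (Perm.ext hinv))
  refine (h.apply_eq_or_apply_eq hσ hx).imp (h.mem_cycleFactorsFinset_of_apply_eq hσ hx)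
    fun hxρ => h.inv.mem_cycleFactorsFinset_of_apply_eq hσ hx ?_
  rw [Perm.inv_eq_iff_eq, hxρ]

theorem sum_signedWeight {R : Type*} [CommRing R] (h : IsOnlyCycle G ρ) (hodd : Odd #ρ.support)
    (w : V → R) {m : ℕ} (hm : Even m) :
    ∑ σ ∈ permsAlong G (#ρ.support + m), signedWeight w σ =
      2 * (∏ x ∈ ρ.support, w x) *
        ∑ τ ∈ permsAlong G m with ρ.Disjoint τ, signedWeight w τ := by
  have hinv : ∑ σ ∈ permsAlong G (#ρ.support + m) with ρ⁻¹ ∈ σ.cycleFactorsFinset,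
      signedWeight w σ =
      signedWeight w ρ * ∑ τ ∈ permsAlong G m with ρ.Disjoint τ, signedWeight w τ := by
    have := sum_signedWeight_of_mem_cycleFactorsFinset w h.isCycle.inv h.movesAlong.inv m
    simpa only [Perm.support_inv, signedWeight_inv, Perm.disjoint_inv_left_iff] using this
  have hsplit : ∀ σ ∈ permsAlong G (#ρ.support + m),
      ρ ∉ σ.cycleFactorsFinset ↔ ρ⁻¹ ∈ σ.cycleFactorsFinset := by
    intro σ hσ
    obtain ⟨hcard, hσG⟩ := mem_permsAlong.1 hσ
    refine ⟨(h.mem_or_inv_mem_cycleFactorsFinset hσG (hcard ▸ hodd.add_even hm)).resolve_left,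
      fun hinv hmem => ?_⟩
    obtain ⟨x, hx, -⟩ := h.isCycle
    have hxinv : ρ⁻¹ x = ρ x :=
      ((Perm.mem_cycleFactorsFinset_iff.1 hinv).2 x (by simpa using hx)).trans
        ((Perm.mem_cycleFactorsFinset_iff.1 hmem).2 x (by simpa using hx)).symm
    exact apply_apply_ne_of_isCycle_of_odd h.isCycle hodd hx (Perm.inv_eq_iff_eq.1 hxinv).symm
  rw [← sum_filter_add_sum_filter_not _ (fun σ : Perm V => ρ ∈ σ.cycleFactorsFinset),
    filter_congr hsplit, hinv, sum_signedWeight_of_mem_cycleFactorsFinset w h.isCycle h.movesAlong,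
    signedWeight_of_isCycle_of_odd w h.isCycle hodd]
  ring

end IsOnlyCycle

end OnlyCycle

section Matchings

/-- A set of edges is a matching if no vertex lies on two of them. -/
def IsMatching (S : Finset (Sym2 V)) : Prop :=
  ∀ e ∈ S, ∀ f ∈ S, e ≠ f → ∀ x : V, ¬(x ∈ e ∧ x ∈ f)

/-- The vertex joined to `x` by an edge of `S`, or `x` itself if there is none; with more than one
such edge the choice is arbitrary. -/
noncomputable def partner (S : Finset (Sym2 V)) (x : V) : V :=
  if h : ∃ y, s(x, y) ∈ S then h.choose else x

variable {S : Finset (Sym2 V)}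

theorem mk_partner_mem {x : V} (hx : partner S x ≠ x) : s(x, partner S x) ∈ S := by
  rw [partner] at hx ⊢
  split_ifs at hx ⊢ with h
  · exact h.choose_spec
  · exact absurd rfl hx

theorem IsMatching.partner_eq (hS : IsMatching S) {x y : V} (h : s(x, y) ∈ S) :
    partner S x = y := by
  have hex : ∃ z, s(x, z) ∈ S := ⟨y, h⟩
  rw [partner, dif_pos hex]
  by_contra hne
  exact hS _ hex.choose_spec _ h (fun he => hne (Sym2.congr_right.1 he)) x
    ⟨Sym2.mem_mk_left _ _, Sym2.mem_mk_left _ _⟩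

theorem IsMatching.involutive_partner (hS : IsMatching S) : Function.Involutive (partner S) := by
  intro x
  by_cases hx : partner S x = x
  · rw [hx, hx]
  · exact hS.partner_eq (Sym2.eq_swap ▸ mk_partner_mem hx)

variable [Fintype V]

theorem matchSum_eq_sum_isMatching (G : SimpleGraph V) (A : Finset (Sym2 V)) (i : ℕ) :
    matchSum G A i = ∑ S ∈ A.powerset with #S = i ∧ IsMatching S, ∏ e ∈ S, edgeM G e := by
  rw [matchSum]
  congr

theorem edgeM_eq_mul_map (G : SimpleGraph V) (e : Sym2 V) :
    edgeM G e = (e.map fun x => (G.degree x : ℝ)⁻¹).mul := by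
  induction e with | _ x y
  simp [edgeM, mul_comm]

/-- The edges of `G` with no end in `s`. -/
noncomputable def edgesAvoiding (G : SimpleGraph V) (s : Finset V) : Finset (Sym2 V) :=
  {e ∈ G.edgeFinset | ∀ x ∈ s, x ∉ e}

variable {G : SimpleGraph V} {s : Finset V}

theorem edgesAvoiding_subset : edgesAvoiding G s ⊆ G.edgeFinset :=
  filter_subset _ _

theorem mk_mem_edgesAvoiding {x y : V} :
    s(x, y) ∈ edgesAvoiding G s ↔ G.Adj x y ∧ x ∉ s ∧ y ∉ s := by
  simp only [edgesAvoiding, mem_filter, SimpleGraph.mem_edgeFinset, SimpleGraph.mem_edgeSet,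
    Sym2.mem_iff]
  grind

variable [DecidableEq V] {τ : Perm V}

/-- The edges `{x, τ x}` over the vertices `x` moved by `τ`. -/
def movedEdges (τ : Perm V) : Finset (Sym2 V) :=
  τ.support.image fun x => s(x, τ x)

theorem mk_mem_movedEdges (hτ : Function.Involutive τ) {x y : V} :
    s(x, y) ∈ movedEdges τ ↔ τ x ≠ x ∧ τ x = y := by
  simp only [movedEdges, mem_image, Perm.mem_support]
  constructor
  · rintro ⟨z, hz, he⟩
    rcases Sym2.eq_iff.1 he with ⟨rfl, rfl⟩ | ⟨rfl, rfl⟩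
    · exact ⟨hz, rfl⟩
    · rw [hτ]
      exact ⟨hz.symm, rfl⟩
  · rintro ⟨hx, rfl⟩
    exact ⟨x, hx, rfl⟩

theorem isMatching_movedEdges (hτ : Function.Involutive τ) : IsMatching (movedEdges τ) := by
  rintro e he f hf hne x ⟨hxe, hxf⟩
  obtain ⟨y, rfl⟩ := Sym2.mem_iff_exists.1 hxe
  obtain ⟨z, rfl⟩ := Sym2.mem_iff_exists.1 hxf
  rw [mk_mem_movedEdges hτ] at he hf
  exact hne (by rw [← he.2, ← hf.2])

theorem movedEdges_partner (hS : IsMatching S) (hloop : ∀ e ∈ S, ¬ e.IsDiag) :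
    movedEdges hS.involutive_partner.toPerm = S := by
  ext e
  induction e with | _ x y
  rw [mk_mem_movedEdges hS.involutive_partner, Function.Involutive.coe_toPerm]
  constructor
  · rintro ⟨hx, rfl⟩
    exact mk_partner_mem hx
  · intro h
    have hxy := hS.partner_eq h
    exact ⟨fun hx => hloop _ h (Sym2.mk_isDiag_iff.2 (hx.symm.trans hxy)), hxy⟩

theorem movedEdges_injOn : Set.InjOn movedEdges {τ : Perm V | Function.Involutive τ} := by
  intro σ hσ τ hτ he
  have hiff : ∀ x y, (σ x ≠ x ∧ σ x = y) ↔ (τ x ≠ x ∧ τ x = y) := fun x y => by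
    rw [← mk_mem_movedEdges hσ, he, mk_mem_movedEdges hτ]
  ext x
  by_cases hx : σ x = x
  · by_contra hne
    exact ((hiff x (τ x)).2 ⟨fun h => hne (hx.trans h.symm), rfl⟩).1 hx
  · exact ((hiff x (σ x)).1 ⟨hx, rfl⟩).2.symm

theorem filter_support_mk_eq (hτ : Function.Involutive τ) {x : V} (hx : τ x ≠ x) :
    {y ∈ τ.support | s(y, τ y) = s(x, τ x)} = ({x, τ x} : Finset V) := by
  ext y
  simp only [mem_filter, Perm.mem_support, mem_insert, mem_singleton]
  constructor
  · rintro ⟨-, he⟩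
    exact (Sym2.eq_iff.1 he).imp And.left And.left
  · rintro (rfl | rfl)
    · exact ⟨hx, rfl⟩
    · rw [hτ]
      exact ⟨hx.symm, Sym2.eq_swap⟩

theorem prod_movedEdges {M : Type*} [CommMonoid M] (hτ : Function.Involutive τ) (w : V → M) :
    ∏ e ∈ movedEdges τ, (e.map w).mul = ∏ x ∈ τ.support, w x := by
  rw [← prod_fiberwise_of_maps_to fun x => mem_image_of_mem fun x => s(x, τ x)]
  refine prod_congr rfl fun e he => ?_
  obtain ⟨x, hx, rfl⟩ := mem_image.1 he
  have hx := Perm.mem_support.1 hx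
  rw [filter_support_mk_eq hτ hx, prod_pair hx.symm, Sym2.map_mk, Sym2.mul_mk]

theorem card_support_eq_two_mul (hτ : Function.Involutive τ) :
    #τ.support = 2 * #(movedEdges τ) := by
  rw [card_eq_sum_card_fiberwise fun x => mem_image_of_mem fun x => s(x, τ x), mul_comm]
  refine sum_const_nat fun e he => ?_
  obtain ⟨x, hx, rfl⟩ := mem_image.1 he
  have hx := Perm.mem_support.1 hx
  rw [filter_support_mk_eq hτ hx, card_pair hx.symm]

theorem sign_of_involutive (hτ : Function.Involutive τ) :
    Perm.sign τ = (-1) ^ #(movedEdges τ) := by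
  have hfixed : Fintype.card V - Fintype.card (Function.fixedPoints τ) = #τ.support := by
    rw [Perm.card_fixedPoints, Nat.sub_sub_self (Perm.sum_cycleType_le _), Perm.sum_cycleType]
  rw [Perm.sign_of_pow_two_eq_one (Perm.ext hτ), hfixed, card_support_eq_two_mul hτ,
    Nat.mul_div_cancel_left _ two_pos]

theorem movedEdges_subset_edgesAvoiding_iff (hτ : Function.Involutive τ) :
    movedEdges τ ⊆ edgesAvoiding G s ↔ MovesAlong G τ ∧ Disjoint s τ.support := by
  simp only [movedEdges, image_subset_iff, mk_mem_edgesAvoiding, MovesAlong, disjoint_right,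
    Perm.mem_support]
  refine ⟨fun h => ⟨fun x hx => (h x hx).1, fun x hx => (h x hx).2.1⟩,
    fun ⟨hadj, hdisj⟩ x hx => ⟨hadj hx, hdisj hx, hdisj ?_⟩⟩
  rw [hτ]
  exact hx.symm

theorem signedWeight_of_involutive {R : Type*} [CommRing R] (w : V → R)
    (hτ : Function.Involutive τ) : signedWeight w τ =
      (-1) ^ #(movedEdges τ) * ∏ e ∈ movedEdges τ, (e.map w).mul := by
  rw [signedWeight, sign_of_involutive hτ, prod_movedEdges hτ]
  simp

theorem sum_signedWeight_involutive (G : SimpleGraph V) (s : Finset V) (t : ℕ) :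
    ∑ τ ∈ permsAlong G (2 * t) with Function.Involutive (τ : Perm V) ∧ Disjoint s τ.support,
        signedWeight (fun x => (G.degree x : ℝ)⁻¹) τ =
      (-1) ^ t * matchSum G (edgesAvoiding G s) t := by
  have hmem : ∀ τ : Perm V, Function.Involutive τ →
      (movedEdges τ ⊆ edgesAvoiding G s ∧ #(movedEdges τ) = t ↔
        τ ∈ permsAlong G (2 * t) ∧ Disjoint s τ.support) := by
    intro τ hτ
    rw [movedEdges_subset_edgesAvoiding_iff hτ, mem_permsAlong, card_support_eq_two_mul hτ,
      Nat.mul_right_inj two_ne_zero]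
    tauto
  rw [matchSum_eq_sum_isMatching, mul_sum]
  refine sum_bij (fun τ _ => movedEdges τ) (fun τ h => ?_) (fun σ hσ τ hτ he => ?_)
    (fun S hS => ?_) (fun τ h => ?_)
  · obtain ⟨hτ, hinv, hdisj⟩ := mem_filter.1 h
    obtain ⟨hsub, hcard⟩ := (hmem τ hinv).2 ⟨hτ, hdisj⟩
    exact mem_filter.2 ⟨mem_powerset.2 hsub, hcard, isMatching_movedEdges hinv⟩
  · exact movedEdges_injOn (mem_filter.1 hσ).2.1 (mem_filter.1 hτ).2.1 he
  · obtain ⟨hsub, hcard, hS⟩ := mem_filter.1 hS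
    rw [mem_powerset] at hsub
    have hmoved := movedEdges_partner hS fun e he =>
      G.not_isDiag_of_mem_edgeFinset (edgesAvoiding_subset (hsub he))
    obtain ⟨hτ, hdisj⟩ := (hmem _ hS.involutive_partner).1 (by rw [hmoved]; exact ⟨hsub, hcard⟩)
    exact ⟨_, mem_filter.2 ⟨hτ, hS.involutive_partner, hdisj⟩, hmoved⟩
  · obtain ⟨hτ, hinv, hdisj⟩ := mem_filter.1 h
    rw [signedWeight_of_involutive _ hinv, ((hmem τ hinv).2 ⟨hτ, hdisj⟩).2]
    simp only [edgeM_eq_mul_map]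

end Matchings

theorem IsOnlyCycle.charpoly_transition_coeff [Fintype V] [DecidableEq V] {G : SimpleGraph V}
    {ρ : Perm V} (h : IsOnlyCycle G ρ) (hodd : Odd #ρ.support) {t : ℕ}
    (ht : #ρ.support + 2 * t ≤ Fintype.card V) :
    (transition G).charpoly.coeff (Fintype.card V - (#ρ.support + 2 * t)) =
      (-1) ^ (t + 1) * (2 * ∏ x ∈ ρ.support, (G.degree x : ℝ)⁻¹) *
        matchSum G (edgesAvoiding G ρ.support) t := by
  have hinvolutive : ∀ τ ∈ permsAlong G (2 * t),
      ρ.Disjoint τ ↔ Function.Involutive τ ∧ Disjoint ρ.support τ.support := by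
    intro τ hτ
    rw [← Perm.disjoint_iff_disjoint_support, iff_and_self]
    exact h.involutive_of_disjoint (mem_permsAlong.1 hτ).2
  rw [GroverPaper.charpoly_transition_coeff G ht, h.sum_signedWeight hodd _ (even_two_mul t),
    filter_congr hinvolutive, sum_signedWeight_involutive,
    (hodd.add_even (even_two_mul t)).neg_one_pow]
  ring

section Unicyclic

theorem isOnlyCycle_of_card_edgeSet_eq [Fintype V] [DecidableEq V] {G : SimpleGraph V}
    (hconn : G.Connected) (hcard : Nat.card G.edgeSet = Nat.card V) {ρ : Perm V} (hρ : ρ.IsCycle)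
    (hρG : MovesAlong G ρ) (hodd : Odd #ρ.support) : IsOnlyCycle G ρ where
  isCycle := hρ
  movesAlong := hρG
  isBridge _ _ := by
    obtain ⟨z, hz, -⟩ := id hρ
    exact isBridge_of_card_edgeSet_eq hconn hcard hρG
      (apply_apply_ne_of_isCycle_of_odd hρ hodd hz)

variable {k : ℕ} {c : ZMod k → V}

section CycleRotation

variable [NeZero k] [DecidableEq V]

/-- The permutation `c i ↦ c (i + 1)`, fixing the vertices off the cycle `c`. -/
noncomputable def cycleRotation (hc : Function.Injective c) : Perm V :=
  (Equiv.addRight (1 : ZMod k)).extendDomain (Equiv.ofInjective c hc)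

theorem cycleRotation_apply (hc : Function.Injective c) (i : ZMod k) :
    cycleRotation hc (c i) = c (i + 1) :=
  (Equiv.addRight (1 : ZMod k)).extendDomain_apply_image (Equiv.ofInjective c hc) i

theorem isCycle_cycleRotation [Nontrivial (ZMod k)] (hc : Function.Injective c) :
    (cycleRotation hc).IsCycle := by
  refine Perm.IsCycle.extendDomain _ ⟨0, by simp, fun i _ => ⟨i.val, ?_⟩⟩
  simp

theorem movesAlong_cycleRotation {G : SimpleGraph V} (hc : Function.Injective c)
    (hadj : ∀ i, G.Adj (c i) (c (i + 1))) : MovesAlong G (cycleRotation hc) := by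
  intro x hx
  obtain ⟨i, rfl⟩ : x ∈ Set.range c := by
    by_contra hoff
    exact hx (Perm.extendDomain_apply_not_subtype _ _ hoff)
  rw [cycleRotation_apply]
  exact hadj i

theorem support_cycleRotation [Nontrivial (ZMod k)] [Fintype V] (hc : Function.Injective c) :
    (cycleRotation hc).support = univ.map ⟨c, hc⟩ := by
  have hall : (Equiv.addRight (1 : ZMod k)).support = univ := by
    ext i
    simp
  rw [cycleRotation, Perm.support_extend_domain, hall]
  rfl

end CycleRotation

theorem eq_or_eq_of_degree_eq_two [Fintype V] {G : SimpleGraph V} {v a b y : V}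
    (hdeg : G.degree v = 2) (ha : G.Adj v a) (hb : G.Adj v b) (hab : a ≠ b) (hy : G.Adj v y) :
    y = a ∨ y = b := by
  have hnbrs : ({a, b} : Finset V) = G.neighborFinset v := by
    refine eq_of_subset_of_card_le (fun z hz => ?_) ?_
    · rcases mem_insert.1 hz with rfl | hz
      · exact (G.mem_neighborFinset _ _).2 ha
      · exact (G.mem_neighborFinset _ _).2 (mem_singleton.1 hz ▸ hb)
    · rw [G.card_neighborFinset_eq_degree, hdeg, card_pair hab]
  have := (G.mem_neighborFinset _ _).2 hy
  rwa [← hnbrs, mem_insert, mem_singleton] at this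

theorem treeEdges_eq_edgesAvoiding [Fintype V] [NeZero k] (hk : 3 ≤ k) {G : SimpleGraph V}
    (hc : Function.Injective c) (hadj : ∀ i, G.Adj (c i) (c (i + 1)))
    (hdeg : ∀ i, i ≠ 0 → G.degree (c i) = 2) :
    treeEdges G c = edgesAvoiding G (univ.map ⟨c, hc⟩) := by
  have hne : ∀ i, c (i + 1) ≠ c (i - 1) := by
    intro i h
    have : Fact (2 < k) := ⟨hk⟩
    exact ZMod.neg_one_ne_one (n := k) (by linear_combination -hc h)
  ext e
  simp only [treeEdges, edgesAvoiding, mem_filter, SimpleGraph.mem_edgeFinset, mem_map, mem_univ,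
    true_and, Function.Embedding.coeFn_mk, forall_exists_index, forall_apply_eq_imp_iff]
  refine and_congr_right fun heG =>
    ⟨fun ⟨hoff, h0⟩ i hi => ?_, fun hoff => ⟨fun i he => ?_, hoff 0⟩⟩
  · obtain ⟨y, rfl⟩ := Sym2.mem_iff_exists.1 hi
    have hi0 : i ≠ 0 := by
      rintro rfl
      exact h0 hi
    have hprev : G.Adj (c i) (c (i - 1)) := by simpa using (hadj (i - 1)).symm
    rcases eq_or_eq_of_degree_eq_two (hdeg i hi0) (hadj i) hprev (hne i) heG with rfl | rfl
    · exact hoff i rfl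
    · exact hoff (i - 1) (by rw [sub_add_cancel, Sym2.eq_swap])
  · exact hoff i (he ▸ Sym2.mem_mk_left _ _)

theorem prod_degree_eq [Fintype V] [NeZero k] {G : SimpleGraph V}
    (hdeg : ∀ i, i ≠ 0 → G.degree (c i) = 2) :
    ∏ i, G.degree (c i) = G.degree (c 0) * 2 ^ (k - 1) := by
  rw [← mul_prod_erase univ _ (mem_univ 0),
    prod_congr rfl fun i hi => hdeg i (ne_of_mem_erase hi), prod_const,
    card_erase_of_mem (mem_univ 0), card_univ, ZMod.card]

theorem charpoly_transition_coeff_of_unicyclic [Fintype V] [DecidableEq V] [NeZero k]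
    {G : SimpleGraph V} (hconn : G.Connected) (hcard : Nat.card G.edgeSet = Nat.card V)
    (hk : 3 ≤ k) (hkodd : Odd k) (hc : Function.Injective c)
    (hadj : ∀ i, G.Adj (c i) (c (i + 1))) (hdeg : ∀ i, i ≠ 0 → G.degree (c i) = 2) {t : ℕ}
    (ht : k + 2 * t ≤ Fintype.card V) :
    2 ^ k * G.degree (c 0) * (transition G).charpoly.coeff (Fintype.card V - (k + 2 * t)) =
      (-1) ^ (t + 1) * 4 * Km G c t := by
  have : Fact (1 < k) := ⟨by lia⟩
  have hsupp := support_cycleRotation hc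
  have hlen : #(cycleRotation hc).support = k := by rw [hsupp, card_map, card_univ, ZMod.card]
  have honly := isOnlyCycle_of_card_edgeSet_eq hconn hcard (isCycle_cycleRotation hc)
    (movesAlong_cycleRotation hc hadj) (by rwa [hlen])
  have hcoeff := honly.charpoly_transition_coeff (t := t) (by rwa [hlen]) (by rwa [hlen])
  have hdeg0 : (G.degree (c 0) : ℝ) ≠ 0 := by
    exact_mod_cast (hadj 0).degree_pos_left.ne'
  have htwo : (2 : ℝ) ^ k = 2 * 2 ^ (k - 1) := by rw [← pow_succ', Nat.sub_add_cancel (by lia)]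
  rw [hlen, hsupp, prod_map, prod_inv_distrib, ← Nat.cast_prod] at hcoeff
  simp only [Function.Embedding.coeFn_mk] at hcoeff
  rw [prod_degree_eq hdeg, ← treeEdges_eq_edgesAvoiding hk hc hadj hdeg, ← Km] at hcoeff
  rw [hcoeff, htwo]
  push_cast
  field_simp
  ring

end Unicyclic

theorem int_matchSum_of_int_coeff_general {V : Type*} [Fintype V] [DecidableEq V]
    (G : SimpleGraph V) (hconn : G.Connected) (k : ℕ) [NeZero k] (hk3 : 3 ≤ k) (hkodd : Odd k)
    (c : ZMod k → V) (hcinj : Function.Injective c)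
    (hcadj : ∀ i : ZMod k, G.Adj (c i) (c (i + 1)))
    (hcard : Fintype.card V = G.edgeFinset.card)
    (hdegu : 4 ∣ G.degree (c 0)) (hdegc : ∀ i : ZMod k, i ≠ 0 → G.degree (c i) = 2)
    (t : ℕ) (htn : k + 2 * t ≤ Fintype.card V)
    (hint : ∃ m : ℤ, (2 : ℝ) ^ (k + 2 * t) *
      (transition G).charpoly.coeff (Fintype.card V - k - 2 * t) = (m : ℝ)) :
    ∃ m : ℤ, (2 : ℝ) ^ (2 * t) * Km G c t = (m : ℝ) := by
  obtain ⟨m, hm⟩ := hint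
  obtain ⟨d, hd⟩ := hdegu
  have hcard' : Nat.card G.edgeSet = Nat.card V := by
    rw [Nat.card_eq_fintype_card, Nat.card_eq_fintype_card, hcard, SimpleGraph.edgeFinset_card]
  have hcoeff :=
    charpoly_transition_coeff_of_unicyclic hconn hcard' hk3 hkodd hcinj hcadj hdegc htn
  have hsign : ((-1 : ℝ) ^ (t + 1)) * (-1) ^ (t + 1) = 1 := by rw [← mul_pow]; simp
  refine ⟨(-1) ^ (t + 1) * d * m, ?_⟩
  rw [Nat.sub_sub, pow_add] at hm
  rw [hd] at hcoeff
  push_cast at hcoeff ⊢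
  linear_combination (-(2 : ℝ) ^ (2 * t) * Km G c t) * hsign
    - (2 : ℝ) ^ (2 * t) * (-1) ^ (t + 1) / 4 * hcoeff + (-1) ^ (t + 1) * d * hm

/-- In the cycle-plus-tree setting, for `t ≥ 1` with `k + 2t ≤ n`:
if `2^(k+2t)·ρ_(n-k-2t)` is an integer, then `2^(2t)·K_(2t)` is an integer. -/
theorem int_matchSum_of_int_coeff {V : Type*} [Fintype V] [DecidableEq V] (G : SimpleGraph V)
    (hconn : G.Connected) (k : ℕ) [NeZero k] (hk3 : 3 ≤ k) (hkodd : Odd k)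
    (c : ZMod k → V) (hcinj : Function.Injective c)
    (hcadj : ∀ i : ZMod k, G.Adj (c i) (c (i + 1)))
    (hcard : Fintype.card V = G.edgeFinset.card)
    (hdegu : G.degree (c 0) = 4) (hdegc : ∀ i : ZMod k, i ≠ 0 → G.degree (c i) = 2)
    (t : ℕ) (ht : 1 ≤ t) (htn : k + 2 * t ≤ Fintype.card V)
    (hint : ∃ m : ℤ, (2 : ℝ) ^ (k + 2 * t) *
      (transition G).charpoly.coeff (Fintype.card V - k - 2 * t) = (m : ℝ)) :
    ∃ m : ℤ, (2 : ℝ) ^ (2 * t) * Km G c t = (m : ℝ) :=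
  int_matchSum_of_int_coeff_general G hconn k hk3 hkodd c hcinj hcadj hcard hdegu.symm.dvd hdegc t
    htn hint

end GroverPaper
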